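/- The continuous-time primal value equals the Lebesgue measure (volume) of the maximum controlled invariant set: p* = λ(X_I). Moreover the supremum is attained by the restriction of the Lebesgue measure to X_I: there exist finite nonnegative Borel measures μ and μ̂₀ such that the triple (λ|_{X_I}, μ, μ̂₀) is feasible for the continuous-time primal LP. -/

import Mathlib

open MeasureTheory
open scoped ENNReal

/-- The (topological) support of a Borel measure. -/
def msupport {α : Type*} [TopologicalSpace α] [MeasurableSpace α] (μ : Measure α) : Set α :=
  {x | ∀ s : Set α, IsOpen s → x ∈ s → 0 < μ s}

/-- An admissible trajectory of the convexified inclusion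
`ẋ(t) ∈ conv f(x(t), U)`, `x(t) ∈ X`, on `[0, ∞)`. -/
def IsAdmissible {n m : ℕ} (X : Set (EuclideanSpace ℝ (Fin n)))
    (U : Set (EuclideanSpace ℝ (Fin m)))
    (f : EuclideanSpace ℝ (Fin n) → EuclideanSpace ℝ (Fin m) → EuclideanSpace ℝ (Fin n))
    (x : ℝ → EuclideanSpace ℝ (Fin n)) : Prop :=
  (∀ t, 0 ≤ t → x t ∈ X) ∧
  ∃ d : ℝ → EuclideanSpace ℝ (Fin n),
    (∀ t, 0 ≤ t → IntervalIntegrable d volume 0 t) ∧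
    (∀ t, 0 ≤ t → x t = x 0 + ∫ s in (0:ℝ)..t, d s) ∧
    (∀ᵐ t ∂(volume.restrict (Set.Ici (0:ℝ))), d t ∈ convexHull ℝ ((f (x t)) '' U))

/-- The maximum controlled invariant set of the continuous-time relaxed system. -/
def mciC {n m : ℕ} (X : Set (EuclideanSpace ℝ (Fin n))) (U : Set (EuclideanSpace ℝ (Fin m)))
    (f : EuclideanSpace ℝ (Fin n) → EuclideanSpace ℝ (Fin m) → EuclideanSpace ℝ (Fin n)) :
    Set (EuclideanSpace ℝ (Fin n)) :=
  {x0 | ∃ x : ℝ → EuclideanSpace ℝ (Fin n), IsAdmissible X U f x ∧ x 0 = x0}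

/-- The continuous-time discounted Liouville equation for the pair `(μ₀, μ)`. -/
def LiouvilleC {n m : ℕ}
    (f : EuclideanSpace ℝ (Fin n) → EuclideanSpace ℝ (Fin m) → EuclideanSpace ℝ (Fin n))
    (β : ℝ) (μ₀ : Measure (EuclideanSpace ℝ (Fin n)))
    (μ : Measure (EuclideanSpace ℝ (Fin n) × EuclideanSpace ℝ (Fin m))) : Prop :=
  ∀ v : EuclideanSpace ℝ (Fin n) → ℝ, ContDiff ℝ 1 v →
    β * ∫ p, v p.1 ∂μ = ∫ x, v x ∂μ₀ + ∫ p, fderiv ℝ v p.1 (f p.1 p.2) ∂μ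

/-- Feasibility of a triple `(μ₀, μ, μ̂₀)` for the continuous-time primal LP. -/
def FeasibleC {n m : ℕ} (X : Set (EuclideanSpace ℝ (Fin n)))
    (U : Set (EuclideanSpace ℝ (Fin m)))
    (f : EuclideanSpace ℝ (Fin n) → EuclideanSpace ℝ (Fin m) → EuclideanSpace ℝ (Fin n))
    (β : ℝ) (μ₀ : Measure (EuclideanSpace ℝ (Fin n)))
    (μ : Measure (EuclideanSpace ℝ (Fin n) × EuclideanSpace ℝ (Fin m)))
    (μh : Measure (EuclideanSpace ℝ (Fin n))) : Prop :=
  IsFiniteMeasure μ₀ ∧ IsFiniteMeasure μ ∧ IsFiniteMeasure μh ∧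
  msupport μ₀ ⊆ X ∧ msupport μh ⊆ X ∧ msupport μ ⊆ X ×ˢ U ∧
  LiouvilleC f β μ₀ μ ∧ μ₀ + μh = volume.restrict X

/-!
Call a state viable up to precision `ε` for the duration `T` if a curve starting there and lasting
for `T` has all its slopes in the convex hull of velocities `f x u` taken at points `x ∈ X` within
`ε` of the curve. The cost `w = inf exp (-β T)` over such durations satisfies
`exp (β s) * w y ≤ w (y + s • f x u)` for `x` near `y`, because the segment in the direction
`f x u` can be prepended to any curve. Mollifying `w` gives a nonnegative `C¹` function `V` with
`β V ≤ ∇V · f` on `X × U` that vanishes only at states viable for all durations. The Liouville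
equation tested against `V` forces `V = 0` almost everywhere for `μ₀`, and a limit of curves as
`ε → 0` and `T → ∞` shows that `μ₀` is carried by the maximum controlled invariant set.

Conversely, a `C¹` function with `∇v · f ≤ β v` on `X × U` is nonnegative on this set by Grönwall's
inequality along a trajectory. Hence `βv - ∇v · f ↦ ∫ v dμ₀` is a positive functional when `μ₀` is
carried by this set, and the theorems of M. Riesz (extension of positive functionals) and
Riesz–Markov–Kakutani represent it by the measure `μ`.
-/

open Filter Function Metric Set
open scoped CompactlySupported Convolution Manifold NNReal Topology

section ConvexHull

variable {E : Type*} [NormedAddCommGroup E] [NormedSpace ℝ E] [FiniteDimensional ℝ E] {s : Set E}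

theorem convexHull_eq_iUnion_image_stdSimplex (s : Set E) :
    convexHull ℝ s = ⋃ k ∈ Iic (Module.finrank ℝ E + 1),
      (fun p : (Fin k → ℝ) × (Fin k → E) ↦ ∑ i, p.1 i • p.2 i) ''
        (stdSimplex ℝ (Fin k) ×ˢ univ.pi fun _ ↦ s) := by
  refine Subset.antisymm (fun x hx ↦ ?_) (iUnion₂_subset fun k _ ↦ ?_)
  · obtain ⟨ι, _, z, w, hz, hind, hw, hw1, rfl⟩ := eq_pos_convex_span_of_mem_convexHull hx
    have hcard : Fintype.card ι ≤ Module.finrank ℝ E + 1 :=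
      hind.card_le_finrank_succ.trans (Nat.succ_le_succ (Submodule.finrank_le _))
    let e := Fintype.equivFin ι
    refine mem_iUnion₂.2 ⟨Fintype.card ι, hcard, (w ∘ e.symm, z ∘ e.symm),
      ⟨⟨fun i ↦ (hw _).le, ?_⟩, fun i _ ↦ hz ⟨_, rfl⟩⟩, ?_⟩
    · exact (e.symm.sum_comp w).trans hw1
    · exact e.symm.sum_comp fun i ↦ w i • z i
  · rintro _ ⟨⟨w, z⟩, ⟨hw, hz⟩, rfl⟩
    exact (convex_convexHull ℝ s).sum_mem (fun i _ ↦ hw.1 i) hw.2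
      fun i _ ↦ subset_convexHull ℝ s (hz i trivial)

theorem isCompact_convexHull_of_isCompact (hs : IsCompact s) : IsCompact (convexHull ℝ s) := by
  rw [convexHull_eq_iUnion_image_stdSimplex]
  exact (finite_Iic _).isCompact_biUnion fun k _ ↦
    ((isCompact_stdSimplex ℝ (Fin k)).prod (isCompact_univ_pi fun _ ↦ hs)).image (by fun_prop)

end ConvexHull

/-- The convexified velocity set `conv f(C, U)` of the control system `ẋ = f(x, u)`, `u ∈ U`,
over a set `C` of states. -/
def relaxedVelocities {E F : Type*} [AddCommGroup E] [Module ℝ E] (f : E → F → E) (C : Set E)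
    (U : Set F) : Set E :=
  convexHull ℝ (image2 f C U)

section RelaxedVelocities

theorem relaxedVelocities_singleton {E F : Type*} [AddCommGroup E] [Module ℝ E] (f : E → F → E)
    (x : E) (U : Set F) : relaxedVelocities f {x} U = convexHull ℝ (f x '' U) := by
  rw [relaxedVelocities, image2_singleton_left]

theorem relaxedVelocities_mono {E F : Type*} [AddCommGroup E] [Module ℝ E] {f : E → F → E}
    {C C' : Set E} {U : Set F} (h : C ⊆ C') :
    relaxedVelocities f C U ⊆ relaxedVelocities f C' U :=
  convexHull_mono (image2_subset_right h)

theorem relaxedVelocities_subset {E F : Type*} [AddCommGroup E] [Module ℝ E] {f : E → F → E}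
    {C K : Set E} {U : Set F} (hK : Convex ℝ K) (h : ∀ x ∈ C, ∀ u ∈ U, f x u ∈ K) :
    relaxedVelocities f C U ⊆ K :=
  convexHull_min (image2_subset_iff.2 h) hK

variable {E F : Type*} [NormedAddCommGroup E] [NormedSpace ℝ E] {f : E → F → E} {X C : Set E}
  {U : Set F}

theorem norm_le_of_mem_relaxedVelocities {M : ℝ} {p : E} (hM : ∀ x ∈ C, ∀ u ∈ U, ‖f x u‖ ≤ M)
    (hp : p ∈ relaxedVelocities f C U) : ‖p‖ ≤ M :=
  mem_closedBall_zero_iff.1 <| relaxedVelocities_subset (convex_closedBall 0 M)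
    (fun x hx u hu ↦ mem_closedBall_zero_iff.2 (hM x hx u hu)) hp

theorem isCompact_relaxedVelocities [FiniteDimensional ℝ E] [TopologicalSpace F]
    (hC : IsCompact C) (hU : IsCompact U) (hf : ContinuousOn (uncurry f) (C ×ˢ U)) :
    IsCompact (relaxedVelocities f C U) := by
  rw [relaxedVelocities, ← image_uncurry_prod]
  exact isCompact_convexHull_of_isCompact ((hC.prod hU).image_of_continuousOn hf)

theorem isClosed_relaxedVelocities_inter_closedBall [FiniteDimensional ℝ E] [TopologicalSpace F]
    (hX : IsCompact X) (hU : IsCompact U) (hf : ContinuousOn (uncurry f) (X ×ˢ U)) (x : E) (r : ℝ) :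
    IsClosed (relaxedVelocities f (X ∩ closedBall x r) U) :=
  (isCompact_relaxedVelocities (hX.inter_right isClosed_closedBall) hU
    (hf.mono (prod_mono_left inter_subset_left))).isClosed

theorem mem_convexHull_image_of_forall_mem_relaxedVelocities [FiniteDimensional ℝ E]
    [PseudoMetricSpace F] (hX : IsCompact X) (hU : IsCompact U)
    (hf : ContinuousOn (uncurry f) (X ×ˢ U)) {x p : E} (hx : x ∈ X)
    (hp : ∀ η > 0, p ∈ relaxedVelocities f (X ∩ closedBall x η) U) :
    p ∈ convexHull ℝ (f x '' U) := by
  have hcompact : IsCompact (relaxedVelocities f {x} U) :=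
    isCompact_relaxedVelocities isCompact_singleton hU
      (hf.mono (prod_mono_left (singleton_subset_iff.2 hx)))
  rw [← relaxedVelocities_singleton, ← hcompact.isClosed.closure_eq,
    closure_eq_iInter_cthickening]
  refine mem_iInter₂.2 fun δ hδ ↦ ?_
  obtain ⟨η, hη, hfη⟩ := Metric.uniformContinuousOn_iff.1
    ((hX.prod hU).uniformContinuousOn_of_continuous hf) δ hδ
  refine relaxedVelocities_subset ((convex_convexHull ℝ _).cthickening δ) ?_ (hp _ (half_pos hη))
  rintro y ⟨hyX, hyx⟩ u hu
  have hdist : dist (y, u) (x, u) < η := by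
    rw [dist_prod_same_right]
    exact (mem_closedBall.1 hyx).trans_lt (half_lt_self hη)
  exact mem_cthickening_of_dist_le _ (f x u) δ _
    (subset_convexHull ℝ _ (mem_image2_of_mem rfl hu)) (hfη _ ⟨hyX, hu⟩ _ ⟨hx, hu⟩ hdist).le

end RelaxedVelocities

/-- The slopes of the curve `γ` between two times in `[a, b]` are convex combinations of
velocities `f x u` with `u ∈ U`, taken at points `x ∈ X` at distance less than `δ` from the arc
of `γ` between these times. This is the precision `δ` version of
`γ̇ ∈ conv f(γ, U)`, `γ ∈ X`, which is stable under translation and concatenation. -/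
def HasNearbySlopes {E F : Type*} [NormedAddCommGroup E] [NormedSpace ℝ E] (f : E → F → E)
    (X : Set E) (U : Set F) (δ : ℝ) (γ : ℝ → E) (a b : ℝ) : Prop :=
  ∀ c d, a ≤ c → c < d → d ≤ b →
    slope γ c d ∈ relaxedVelocities f (X ∩ thickening δ (γ '' Icc c d)) U

namespace HasNearbySlopes

variable {E F : Type*} [NormedAddCommGroup E] [NormedSpace ℝ E] {f : E → F → E} {X : Set E}
  {U : Set F} {γ γ' : ℝ → E} {a b c δ δ' : ℝ}

theorem mono (h : HasNearbySlopes f X U δ γ a b) (hδ : δ ≤ δ') (hc : c ≤ b) :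
    HasNearbySlopes f X U δ' γ a c := fun r s har hrs hsc ↦
  relaxedVelocities_mono (inter_subset_inter_right _ (thickening_mono hδ _))
    (h r s har hrs (hsc.trans hc))

theorem congr (h : HasNearbySlopes f X U δ γ a b) (hγ : EqOn γ γ' (Icc a b)) :
    HasNearbySlopes f X U δ γ' a b := fun r s har hrs hsb ↦ by
  rw [← (hγ.mono (Icc_subset_Icc har hsb)).image_eq, slope_def_module,
    ← hγ ⟨har, hrs.le.trans hsb⟩, ← hγ ⟨har.trans hrs.le, hsb⟩, ← slope_def_module]
  exact h r s har hrs hsb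

theorem add_const (h : HasNearbySlopes f X U δ γ a b) (v : E) :
    HasNearbySlopes f X U (δ + ‖v‖) (fun t ↦ γ t + v) a b := fun r s har hrs hsb ↦ by
  have hslope : slope (fun t ↦ γ t + v) r s = slope γ r s := by
    simp only [slope_def_module, add_sub_add_right_eq_sub]
  rw [hslope]
  refine relaxedVelocities_mono (inter_subset_inter_right _ fun x hx ↦ ?_) (h r s har hrs hsb)
  obtain ⟨_, ⟨t, ht, rfl⟩, hxt⟩ := mem_thickening_iff.1 hx
  refine mem_thickening_iff.2 ⟨γ t + v, mem_image_of_mem _ ht, ?_⟩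
  calc dist x (γ t + v) ≤ dist x (γ t) + dist (γ t) (γ t + v) := dist_triangle _ _ _
    _ < δ + ‖v‖ := by rw [dist_self_add_right]; gcongr

theorem comp_sub_const (h : HasNearbySlopes f X U δ γ a b) (c : ℝ) :
    HasNearbySlopes f X U δ (fun t ↦ γ (t - c)) (a + c) (b + c) := fun r s har hrs hsb ↦ by
  have himage : (fun t ↦ γ (t - c)) '' Icc r s = γ '' Icc (r - c) (s - c) := by
    rw [← image_sub_const_Icc, image_image]
  have hslope : slope (fun t ↦ γ (t - c)) r s = slope γ (r - c) (s - c) := by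
    simp only [slope_def_module, sub_sub_sub_cancel_right]
  rw [himage, hslope]
  exact h _ _ (le_sub_iff_add_le.2 har) (sub_lt_sub_right hrs c) (sub_le_iff_le_add.2 hsb)

theorem trans (hab : HasNearbySlopes f X U δ γ a b) (hbc : HasNearbySlopes f X U δ γ b c) :
    HasNearbySlopes f X U δ γ a c := fun r s har hrs hsc ↦ by
  rcases le_or_gt s b with hsb | hbs
  · exact hab r s har hrs hsb
  rcases le_or_gt b r with hbr | hrb
  · exact hbc r s hbr hrs hsc
  have hmono {r' s' : ℝ} (hr : r ≤ r') (hs : s' ≤ s) :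
      relaxedVelocities f (X ∩ thickening δ (γ '' Icc r' s')) U ⊆
        relaxedVelocities f (X ∩ thickening δ (γ '' Icc r s)) U :=
    relaxedVelocities_mono <| inter_subset_inter_right _ <|
      thickening_subset_of_subset δ (image_mono (Icc_subset_Icc hr hs))
  rw [← lineMap_slope_slope_sub_div_sub γ r b s hrs.ne]
  refine (convex_convexHull ℝ _).lineMap_mem (hmono le_rfl hbs.le (hab r b har hrb le_rfl))
    (hmono hrb.le le_rfl (hbc b s le_rfl hbs hsc))
    ⟨div_nonneg (sub_nonneg.2 hbs.le) (sub_nonneg.2 hrs.le), ?_⟩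
  exact div_le_one_of_le₀ (sub_le_sub_left hrb.le s) (sub_nonneg.2 hrs.le)

theorem of_segment {x y : E} {u : F} {s : ℝ} (hx : x ∈ X) (hu : u ∈ U) (hy : dist x y < δ)
    (hy' : dist x (y + s • f x u) < δ) :
    HasNearbySlopes f X U δ (fun t ↦ y + t • f x u) 0 s := fun r t h0r hrt hts ↦ by
  have hs : 0 < s := h0r.trans_lt (hrt.trans_le hts)
  have hslope : slope (fun t ↦ y + t • f x u) r t = f x u := by
    rw [slope_def_module, add_sub_add_left_eq_sub, ← sub_smul, smul_smul,
      inv_mul_cancel₀ (sub_pos.2 hrt).ne', one_smul]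
  have hball : y + r • f x u ∈ ball x δ := by
    have h := (convex_ball x δ).add_smul_mem (mem_ball'.2 hy) (mem_ball'.2 hy')
      ⟨div_nonneg h0r hs.le, div_le_one_of_le₀ (hrt.le.trans hts) hs.le⟩
    rwa [smul_smul, div_mul_cancel₀ r hs.ne'] at h
  rw [hslope]
  refine subset_convexHull ℝ _ (mem_image2_of_mem ⟨hx, mem_thickening_iff.2 ?_⟩ hu)
  exact ⟨_, mem_image_of_mem _ (left_mem_Icc.2 hrt.le), mem_ball'.1 hball⟩

variable {K : ℝ≥0}

theorem norm_slope_le (h : HasNearbySlopes f X U δ γ a b) (hK : ∀ x ∈ X, ∀ u ∈ U, ‖f x u‖ ≤ K)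
    {s t : ℝ} (has : a ≤ s) (hst : s < t) (htb : t ≤ b) : ‖slope γ s t‖ ≤ K :=
  norm_le_of_mem_relaxedVelocities (fun x hx u hu ↦ hK x hx.1 u hu) (h s t has hst htb)

theorem lipschitzOnWith (h : HasNearbySlopes f X U δ γ a b)
    (hK : ∀ x ∈ X, ∀ u ∈ U, ‖f x u‖ ≤ K) : LipschitzOnWith K γ (Icc a b) := by
  have hlt {s t : ℝ} (has : a ≤ s) (hst : s < t) (htb : t ≤ b) :
      dist (γ s) (γ t) ≤ K * dist s t := by
    rw [dist_comm, dist_comm s, dist_eq_norm, ← vsub_eq_sub, ← sub_smul_slope, norm_smul, mul_comm,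
      ← dist_eq_norm]
    gcongr
    exact h.norm_slope_le hK has hst htb
  refine LipschitzOnWith.of_dist_le_mul fun s hs t ht ↦ ?_
  rcases lt_trichotomy s t with hst | rfl | hts
  · exact hlt hs.1 hst ht.2
  · simp only [dist_self, mul_zero, le_refl]
  · rw [dist_comm, dist_comm s]
    exact hlt ht.1 hts hs.2

theorem slope_mem (h : HasNearbySlopes f X U δ γ a b) (hK : ∀ x ∈ X, ∀ u ∈ U, ‖f x u‖ ≤ K)
    {s t : ℝ} (has : a ≤ s) (hst : s < t) (htb : t ≤ b) :
    slope γ s t ∈ relaxedVelocities f (X ∩ closedBall (γ s) (K * (t - s) + δ)) U := by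
  refine relaxedVelocities_mono (inter_subset_inter_right _ fun x hx ↦ ?_) (h s t has hst htb)
  obtain ⟨_, ⟨r, hr, rfl⟩, hxr⟩ := mem_thickening_iff.1 hx
  have hdist : dist (γ r) (γ s) ≤ K * (t - s) := by
    refine ((h.lipschitzOnWith hK).dist_le_mul r ⟨has.trans hr.1, hr.2.trans htb⟩ s
      ⟨has, hst.le.trans htb⟩).trans ?_
    rw [Real.dist_eq, abs_of_nonneg (sub_nonneg.2 hr.1)]
    gcongr
    exact hr.2
  calc dist x (γ s) ≤ dist x (γ r) + dist (γ r) (γ s) := dist_triangle _ _ _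
    _ ≤ K * (t - s) + δ := by linarith

end HasNearbySlopes

/-- The state `y` is viable up to precision `ε` for the duration `T`: an approximate trajectory
of precision better than `ε` starts at `y` and lasts for `T`. The strict inequality `δ < ε` makes
this an open condition on `y`. -/
def IsApproxViable {E F : Type*} [NormedAddCommGroup E] [NormedSpace ℝ E] (f : E → F → E)
    (X : Set E) (U : Set F) (ε T : ℝ) (y : E) : Prop :=
  ∃ δ < ε, ∃ γ : ℝ → E, γ 0 = y ∧ HasNearbySlopes f X U δ γ 0 T

section ApproxViable

variable {E F : Type*} [NormedAddCommGroup E] [NormedSpace ℝ E] {f : E → F → E} {X : Set E}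
  {U : Set F} {ε T : ℝ} {y : E}

theorem HasNearbySlopes.isApproxViable {γ : ℝ → E} {δ : ℝ} {z : E}
    (h : HasNearbySlopes f X U δ γ 0 T) (hz : δ + dist z (γ 0) < ε) :
    IsApproxViable f X U ε T z :=
  ⟨δ + ‖z - γ 0‖, by rwa [← dist_eq_norm], fun t ↦ γ t + (z - γ 0), add_sub_cancel _ _,
    h.add_const _⟩

namespace IsApproxViable

theorem zero (f : E → F → E) (X : Set E) (U : Set F) (ε : ℝ) (y : E) :
    IsApproxViable f X U ε 0 y :=
  ⟨ε - 1, sub_one_lt ε, fun _ ↦ y, rfl, fun _ _ hr hrt ht ↦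
    absurd (hr.trans_lt hrt) ht.not_gt⟩

theorem mono_time {T' : ℝ} (h : IsApproxViable f X U ε T y) (hT : T' ≤ T) :
    IsApproxViable f X U ε T' y := by
  obtain ⟨δ, hδ, γ, hγ0, hγ⟩ := h
  exact ⟨δ, hδ, γ, hγ0, hγ.mono le_rfl hT⟩

theorem of_add_dist_le {ε' : ℝ} {z : E} (h : IsApproxViable f X U ε T y)
    (hz : ε + dist z y ≤ ε') : IsApproxViable f X U ε' T z := by
  obtain ⟨δ, hδ, γ, rfl, hγ⟩ := h
  exact hγ.isApproxViable ((add_lt_add_left hδ _).trans_le hz)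

theorem isOpen_setOf (f : E → F → E) (X : Set E) (U : Set F) (ε T : ℝ) :
    IsOpen {y | IsApproxViable f X U ε T y} := by
  refine Metric.isOpen_iff.2 fun y ⟨δ, hδ, γ, hγ0, hγ⟩ ↦
    ⟨ε - δ, sub_pos.2 hδ, fun z hz ↦ hγ.isApproxViable ?_⟩
  rw [hγ0]
  exact lt_sub_iff_add_lt'.1 (mem_ball.1 hz)

theorem cons {s : ℝ} {x : E} {u : F} (hx : x ∈ X) (hu : u ∈ U) (hs : 0 ≤ s) (hy : dist x y < ε)
    (hy' : dist x (y + s • f x u) < ε) (h : IsApproxViable f X U ε T (y + s • f x u)) :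
    IsApproxViable f X U ε (s + T) y := by
  obtain ⟨δ, hδ, γ, hγ0, hγ⟩ := h
  obtain ⟨δ', hmax, hδ'⟩ := exists_between (max_lt hδ (max_lt hy hy'))
  rw [max_lt_iff, max_lt_iff] at hmax
  let Γ : ℝ → E := fun r ↦ if r ≤ s then y + r • f x u else γ (r - s)
  have hfirst : HasNearbySlopes f X U δ' Γ 0 s :=
    (HasNearbySlopes.of_segment hx hu hmax.2.1 hmax.2.2).congr fun r hr ↦ (if_pos hr.2).symm
  have hsecond : HasNearbySlopes f X U δ' Γ s (s + T) := by
    have hshift := (hγ.mono hmax.1.le le_rfl).comp_sub_const s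
    rw [zero_add, add_comm] at hshift
    refine hshift.congr fun r hr ↦ ?_
    rcases hr.1.eq_or_lt with rfl | hsr
    · simp only [Γ, le_refl, if_true, sub_self, hγ0]
    · simp only [Γ, hsr.not_ge, if_false]
  refine ⟨δ', hδ', Γ, ?_, hfirst.trans hsecond⟩
  simp only [Γ, hs, if_true, zero_smul, add_zero]

end IsApproxViable

end ApproxViable

/-- The discounted survival cost `inf exp (-β t)` over the durations `t` for which the state `y`
is viable up to precision `ε`. -/
noncomputable def survivalCost {E F : Type*} [NormedAddCommGroup E] [NormedSpace ℝ E]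
    (f : E → F → E) (X : Set E) (U : Set F) (ε β : ℝ) (y : E) : ℝ :=
  sInf ((fun t ↦ Real.exp (-β * t)) '' {t | IsApproxViable f X U ε t y})

section SurvivalCost

variable {E F : Type*} [NormedAddCommGroup E] [NormedSpace ℝ E] {f : E → F → E} {X : Set E}
  {U : Set F} {ε β T : ℝ} {y : E}

theorem survivalCost_nonneg (f : E → F → E) (X : Set E) (U : Set F) (ε β : ℝ) (y : E) :
    0 ≤ survivalCost f X U ε β y :=
  Real.sInf_nonneg (forall_mem_image.2 fun _ _ ↦ (Real.exp_pos _).le)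

theorem IsApproxViable.survivalCost_le (h : IsApproxViable f X U ε T y) (β : ℝ) :
    survivalCost f X U ε β y ≤ Real.exp (-β * T) :=
  csInf_le ⟨0, forall_mem_image.2 fun _ _ ↦ (Real.exp_pos _).le⟩ (mem_image_of_mem _ h)

theorem le_survivalCost {a : ℝ}
    (h : ∀ t, IsApproxViable f X U ε t y → a ≤ Real.exp (-β * t)) :
    a ≤ survivalCost f X U ε β y :=
  le_csInf (Nonempty.image _ ⟨0, IsApproxViable.zero f X U ε y⟩) (forall_mem_image.2 h)

theorem survivalCost_lt_iff {a : ℝ} :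
    survivalCost f X U ε β y < a ↔ ∃ t, IsApproxViable f X U ε t y ∧ Real.exp (-β * t) < a := by
  refine ⟨fun h ↦ ?_, fun ⟨t, ht, hta⟩ ↦ (ht.survivalCost_le β).trans_lt hta⟩
  by_contra! hle
  exact h.not_ge (le_survivalCost hle)

theorem survivalCost_le_one (f : E → F → E) (X : Set E) (U : Set F) (ε β : ℝ) (y : E) :
    survivalCost f X U ε β y ≤ 1 := by
  simpa only [mul_zero, Real.exp_zero] using
    (IsApproxViable.zero f X U ε y).survivalCost_le β

theorem isApproxViable_of_survivalCost_eq_zero (hβ : 0 < β)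
    (h : survivalCost f X U ε β y = 0) (T : ℝ) : IsApproxViable f X U ε T y := by
  obtain ⟨t, ht, htT⟩ := survivalCost_lt_iff.1 (h.trans_lt (Real.exp_pos (-β * T)))
  rw [Real.exp_lt_exp, neg_mul, neg_mul, neg_lt_neg_iff] at htT
  exact ht.mono_time (lt_of_mul_lt_mul_left htT hβ.le).le

theorem exp_mul_survivalCost_le {s : ℝ} {x : E} {u : F} (hx : x ∈ X) (hu : u ∈ U) (hs : 0 ≤ s)
    (hy : dist x y < ε) (hy' : dist x (y + s • f x u) < ε) :
    Real.exp (β * s) * survivalCost f X U ε β y ≤ survivalCost f X U ε β (y + s • f x u) := by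
  refine le_survivalCost fun t ht ↦ ?_
  calc Real.exp (β * s) * survivalCost f X U ε β y
      ≤ Real.exp (β * s) * Real.exp (-β * (s + t)) := by
        gcongr
        exact (ht.cons hx hu hs hy hy').survivalCost_le β
    _ = Real.exp (-β * t) := by rw [← Real.exp_add]; ring_nf

theorem measurable_survivalCost [MeasurableSpace E] [BorelSpace E]
    (f : E → F → E) (X : Set E) (U : Set F) (ε β : ℝ) : Measurable (survivalCost f X U ε β) := by
  refine measurable_of_Iio fun a ↦ IsOpen.measurableSet ?_
  have hpreimage : survivalCost f X U ε β ⁻¹' Iio a =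
      ⋃ t ∈ {t | Real.exp (-β * t) < a}, {y | IsApproxViable f X U ε t y} := by
    ext y
    simp only [mem_preimage, mem_Iio, survivalCost_lt_iff, mem_iUnion, mem_ofPred_eq, exists_prop,
      and_comm]
  rw [hpreimage]
  exact isOpen_biUnion fun t _ ↦ IsApproxViable.isOpen_setOf f X U ε t

theorem locallyIntegrable_survivalCost [MeasurableSpace E] [BorelSpace E] {μ : Measure E}
    [IsLocallyFiniteMeasure μ] (f : E → F → E) (X : Set E) (U : Set F) (ε β : ℝ) :
    LocallyIntegrable (survivalCost f X U ε β) μ := by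
  refine (locallyIntegrable_const (1 : ℝ)).mono
    (measurable_survivalCost f X U ε β).aestronglyMeasurable (.of_forall fun y ↦ ?_)
  rw [Real.norm_of_nonneg (survivalCost_nonneg f X U ε β y), norm_one]
  exact survivalCost_le_one f X U ε β y

end SurvivalCost

section Mollification

variable {E : Type*} [NormedAddCommGroup E] [NormedSpace ℝ E] [FiniteDimensional ℝ E]
  [MeasurableSpace E] [BorelSpace E] {μ : Measure E} [μ.IsAddHaarMeasure] (φ : ContDiffBump (0 : E))
  {w : E → ℝ}

theorem integrable_normed_mul_comp_sub (hw : LocallyIntegrable w μ) (x : E) :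
    Integrable (fun z ↦ φ.normed μ z * w (x - z)) μ :=
  φ.hasCompactSupport_normed.convolutionExists_left (ContinuousLinearMap.lsmul ℝ ℝ)
    φ.continuous_normed hw x

theorem contDiff_normed_convolution (hw : LocallyIntegrable w μ) :
    ContDiff ℝ 1 (φ.normed μ ⋆[ContinuousLinearMap.lsmul ℝ ℝ, μ] w) :=
  φ.hasCompactSupport_normed.contDiff_convolution_left (n := 1) _ φ.contDiff_normed hw

theorem const_mul_normed_convolution_le (hw : LocallyIntegrable w μ) {c : ℝ} {x h : E}
    (hwh : ∀ z ∈ ball x φ.rOut, c * w z ≤ w (z + h)) :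
    c * (φ.normed μ ⋆[ContinuousLinearMap.lsmul ℝ ℝ, μ] w) x ≤
      (φ.normed μ ⋆[ContinuousLinearMap.lsmul ℝ ℝ, μ] w) (x + h) := by
  simp only [convolution_def, ContinuousLinearMap.lsmul_apply, smul_eq_mul]
  rw [← integral_const_mul]
  refine integral_mono ((integrable_normed_mul_comp_sub φ hw x).const_mul c)
    (integrable_normed_mul_comp_sub φ hw (x + h)) fun z ↦ ?_
  rcases eq_or_ne (φ.normed μ z) 0 with hz | hz
  · simp only [hz, zero_mul, mul_zero, le_refl]
  have hz' : z ∈ ball 0 φ.rOut := φ.support_normed_eq.subset (mem_support.2 hz)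
  calc c * (φ.normed μ z * w (x - z)) = φ.normed μ z * (c * w (x - z)) := mul_left_comm _ _ _
    _ ≤ φ.normed μ z * w (x - z + h) := by
      refine mul_le_mul_of_nonneg_left (hwh _ ?_) (φ.nonneg_normed z)
      rwa [mem_ball, dist_self_sub_left, ← mem_ball_zero_iff]
    _ = φ.normed μ z * w (x + h - z) := by rw [sub_add_eq_add_sub]

theorem exists_mem_ball_eq_zero_of_normed_convolution_eq_zero (hw : LocallyIntegrable w μ)
    (hw0 : ∀ z, 0 ≤ w z) {x : E}
    (hx : (φ.normed μ ⋆[ContinuousLinearMap.lsmul ℝ ℝ, μ] w) x = 0) :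
    ∃ y ∈ ball x φ.rOut, w y = 0 := by
  have hae := (integral_eq_zero_iff_of_nonneg (fun z ↦ mul_nonneg (φ.nonneg_normed z) (hw0 _))
    (integrable_normed_mul_comp_sub φ hw x)).1 hx
  obtain ⟨z, hz, hzball⟩ := (Measure.dense_of_ae hae).exists_mem_open isOpen_ball
    ⟨0, mem_ball_self φ.rOut_pos⟩
  have hφz : φ.normed μ z ≠ 0 := mem_support.1 (φ.support_normed_eq.superset hzball)
  refine ⟨x - z, ?_, (mul_eq_zero.1 hz).resolve_left hφz⟩
  rwa [mem_ball, dist_self_sub_left, ← mem_ball_zero_iff]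

end Mollification

theorem mul_le_fderiv_of_eventually_exp_mul_le {E : Type*} [NormedAddCommGroup E]
    [NormedSpace ℝ E] {V : E → ℝ} {x v : E} {β : ℝ} (hV : DifferentiableAt ℝ V x)
    (h : ∀ᶠ s in 𝓝[>] (0 : ℝ), Real.exp (β * s) * V x ≤ V (x + s • v)) :
    β * V x ≤ fderiv ℝ V x v := by
  have hexp : HasDerivAt (fun s : ℝ ↦ Real.exp (β * s) * V x) (β * V x) 0 := by
    simpa using (((hasDerivAt_id (0 : ℝ)).const_mul β).exp).mul_const (V x)
  have hline : HasDerivAt (fun s : ℝ ↦ V (x + s • v)) (fderiv ℝ V x v) 0 :=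
    hV.hasFDerivAt.hasLineDerivAt v
  refine le_of_tendsto_of_tendsto hexp.tendsto_slope_zero_right hline.tendsto_slope_zero_right ?_
  filter_upwards [h, self_mem_nhdsWithin] with s hs hs0
  simp only [zero_add, mul_zero, Real.exp_zero, one_mul, zero_smul, add_zero]
  exact smul_le_smul_of_nonneg_left (sub_le_sub_right hs _) (inv_nonneg.2 (le_of_lt hs0))

theorem exists_contDiff_growth {E F : Type*} [NormedAddCommGroup E] [NormedSpace ℝ E]
    [FiniteDimensional ℝ E] (f : E → F → E) (X : Set E) (U : Set F) {ε β : ℝ}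
    (hε : 0 < ε) (hβ : 0 < β) :
    ∃ V : E → ℝ, ContDiff ℝ 1 V ∧ (∀ x, 0 ≤ V x) ∧
      (∀ x ∈ X, ∀ u ∈ U, β * V x ≤ fderiv ℝ V x (f x u)) ∧
      ∀ x, V x = 0 → ∀ T, IsApproxViable f X U ε T x := by
  borelize E
  let φ : ContDiffBump (0 : E) := ⟨ε / 8, ε / 4, by positivity, by linarith⟩
  let w := survivalCost f X U (ε / 2) β
  have hw : LocallyIntegrable w Measure.addHaar := locallyIntegrable_survivalCost f X U _ β
  have hw0 : ∀ y, 0 ≤ w y := survivalCost_nonneg f X U _ β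
  have hV := contDiff_normed_convolution φ hw
  refine ⟨_, hV,
    fun x ↦ integral_nonneg fun z ↦ mul_nonneg (φ.nonneg_normed z) (hw0 _),
    fun x hx u hu ↦ ?_, fun x hx T ↦ ?_⟩
  · refine mul_le_fderiv_of_eventually_exp_mul_le (hV.differentiable one_ne_zero x) ?_
    have hsmall : ∀ᶠ s in 𝓝 (0 : ℝ), ‖s • f x u‖ < ε / 4 := by
      refine (Continuous.tendsto' (by fun_prop) 0 0 ?_).eventually_lt_const (by positivity)
      rw [zero_smul, norm_zero]
    filter_upwards [nhdsWithin_le_nhds hsmall, self_mem_nhdsWithin] with s hs hs0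
    refine const_mul_normed_convolution_le φ hw fun z hz ↦ ?_
    have hxz : dist x z < ε / 4 := mem_ball'.1 hz
    have hdist : dist x (z + s • f x u) ≤ dist x z + ‖s • f x u‖ := by
      simpa only [dist_self_add_right] using dist_triangle x z (z + s • f x u)
    exact exp_mul_survivalCost_le hx hu (le_of_lt hs0) (by linarith) (by linarith)
  · obtain ⟨y, hy, hwy⟩ := exists_mem_ball_eq_zero_of_normed_convolution_eq_zero φ hw hw0 hx
    refine (isApproxViable_of_survivalCost_eq_zero hβ hwy T).of_add_dist_le ?_
    have hxy : dist x y < ε / 4 := mem_ball'.1 hy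
    linarith

section LimitCurve

variable {E F : Type*} [NormedAddCommGroup E] [NormedSpace ℝ E] {f : E → F → E} {X : Set E}
  {U : Set F} {K : ℝ≥0} {x₀ : E}

theorem IsApproxViable.exists_lipschitzWith {ε T : ℝ} (h : IsApproxViable f X U ε T x₀)
    (hK : ∀ x ∈ X, ∀ u ∈ U, ‖f x u‖ ≤ K) (hT : 0 ≤ T) :
    ∃ γ : ℝ → E, LipschitzWith K γ ∧ γ 0 = x₀ ∧ HasNearbySlopes f X U ε γ 0 T := by
  obtain ⟨δ, hδ, γ, hγ0, hγ⟩ := h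
  have hext : EqOn γ (IccExtend hT ((Icc 0 T).domRestrict γ)) (Icc 0 T) := fun t ht ↦ by
    rw [IccExtend_of_mem hT _ ht, domRestrict_apply]
  refine ⟨IccExtend hT ((Icc 0 T).domRestrict γ), ?_, ?_, (hγ.mono hδ.le le_rfl).congr hext⟩
  · simpa only [IccExtend, mul_one] using
      (hγ.lipschitzOnWith hK).to_restrict.comp (LipschitzWith.projIcc hT)
  · rw [← hext (left_mem_Icc.2 hT), hγ0]

variable [FiniteDimensional ℝ E]

theorem exists_tendsto_hyperfilter_of_lipschitzWith {γ : ℕ → ℝ → E}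
    (hγ : ∀ k, LipschitzWith K (γ k)) (hγ0 : ∀ k, γ k 0 = x₀) :
    ∃ Γ : ℝ → E, Tendsto γ (hyperfilter ℕ) (𝓝 Γ) := by
  have hcompact : IsCompact (univ.pi fun t : ℝ ↦ closedBall x₀ (K * dist t 0)) :=
    isCompact_univ_pi fun t ↦ isCompact_closedBall x₀ _
  have hmem (k : ℕ) : γ k ∈ univ.pi fun t : ℝ ↦ closedBall x₀ (K * dist t 0) := fun t _ ↦ by
    simpa only [mem_closedBall, hγ0] using (hγ k).dist_le_mul t 0
  obtain ⟨Γ, -, hΓ⟩ := hcompact.ultrafilter_le_nhds ((hyperfilter ℕ).map γ)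
    (le_principal_iff.2 (mem_map.2 (univ_mem' hmem)))
  exact ⟨Γ, hΓ⟩

theorem slope_mem_relaxedVelocities_of_tendsto [TopologicalSpace F] (hX : IsCompact X)
    (hU : IsCompact U) (hf : ContinuousOn (uncurry f) (X ×ˢ U)) {ι : Type*} {l : Filter ι}
    [l.NeBot] {γ : ι → ℝ → E} {Γ : ℝ → E} {δ : ι → ℝ} {a b r η : ℝ} (hΓ : Tendsto γ l (𝓝 Γ))
    (hδ : Tendsto δ l (𝓝 0)) (hη : 0 < η)
    (hγ : ∀ᶠ k in l,
      slope (γ k) a b ∈ relaxedVelocities f (X ∩ closedBall (γ k a) (r + δ k)) U) :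
    slope Γ a b ∈ relaxedVelocities f (X ∩ closedBall (Γ a) (r + η)) U := by
  have hpt (t : ℝ) : Tendsto (fun k ↦ γ k t) l (𝓝 (Γ t)) := tendsto_pi_nhds.1 hΓ t
  have hslope : Tendsto (fun k ↦ slope (γ k) a b) l (𝓝 (slope Γ a b)) := by
    simp only [slope_def_module]
    exact ((hpt b).sub (hpt a)).const_smul _
  have hsmall : ∀ᶠ k in l, δ k + dist (γ k a) (Γ a) < η := by
    refine (hδ.add (tendsto_iff_dist_tendsto_zero.1 (hpt a))).eventually_lt_const ?_
    rwa [add_zero]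
  refine (isClosed_relaxedVelocities_inter_closedBall hX hU hf _ _).mem_of_tendsto hslope ?_
  filter_upwards [hγ, hsmall] with k hk hkη
  refine relaxedVelocities_mono (inter_subset_inter_right _ ?_) hk
  exact closedBall_subset_closedBall' (by linarith)

theorem exists_limit_curve [TopologicalSpace F] (hX : IsCompact X)
    (hU : IsCompact U) (hf : ContinuousOn (uncurry f) (X ×ˢ U))
    (hK : ∀ x ∈ X, ∀ u ∈ U, ‖f x u‖ ≤ K) (h : ∀ ε > 0, ∀ T, IsApproxViable f X U ε T x₀) :
    ∃ Γ : ℝ → E, LipschitzWith K Γ ∧ Γ 0 = x₀ ∧ ∀ η > 0, ∀ a b, 0 ≤ a → a < b →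
      slope Γ a b ∈ relaxedVelocities f (X ∩ closedBall (Γ a) (K * (b - a) + η)) U := by
  choose γ hγK hγ0 hγ using fun k : ℕ ↦
    (h (1 / (k + 1)) Nat.one_div_pos_of_nat k).exists_lipschitzWith hK k.cast_nonneg
  obtain ⟨Γ, hΓ⟩ := exists_tendsto_hyperfilter_of_lipschitzWith hγK hγ0
  have hΓ0 : Γ 0 = x₀ :=
    tendsto_nhds_unique (tendsto_pi_nhds.1 hΓ 0) (by simp only [hγ0, tendsto_const_nhds])
  refine ⟨Γ, isClosed_setOfPred_lipschitzWith K |>.mem_of_tendsto hΓ (.of_forall hγK), hΓ0,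
    fun η hη a b ha hab ↦ ?_⟩
  refine slope_mem_relaxedVelocities_of_tendsto hX hU hf hΓ
    (tendsto_one_div_add_atTop_nhds_zero_nat.mono_left Nat.hyperfilter_le_atTop) hη ?_
  filter_upwards [Nat.hyperfilter_le_atTop
    (tendsto_natCast_atTop_atTop.eventually_ge_atTop b)] with k hk
  exact (hγ k).slope_mem hK ha hab hk

theorem exists_trajectory_of_forall_isApproxViable [PseudoMetricSpace F] (hX : IsCompact X)
    (hU : IsCompact U) (hf : ContinuousOn (uncurry f) (X ×ˢ U))
    (h : ∀ ε > 0, ∀ T, IsApproxViable f X U ε T x₀) :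
    ∃ (K : ℝ≥0) (γ : ℝ → E), LipschitzWith K γ ∧ γ 0 = x₀ ∧ (∀ t, 0 ≤ t → γ t ∈ X) ∧
      ∀ t, 0 ≤ t → DifferentiableAt ℝ γ t → deriv γ t ∈ convexHull ℝ (f (γ t) '' U) := by
  obtain ⟨M, hM⟩ := (hX.prod hU).exists_bound_of_continuousOn hf
  obtain ⟨γ, hγK, hγ0, hγ⟩ := exists_limit_curve (K := M.toNNReal) hX hU hf
    (fun x hx u hu ↦ (hM (x, u) ⟨hx, hu⟩).trans M.le_coe_toNNReal) h
  have hslope {t η : ℝ} (ht : 0 ≤ t) (hη : 0 < η) :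
      ∀ᶠ s in 𝓝[>] t, slope γ t s ∈ relaxedVelocities f (X ∩ closedBall (γ t) η) U := by
    have hsmall : ∀ᶠ s in 𝓝 t, M.toNNReal * (s - t) < η / 2 := by
      refine (Continuous.tendsto' (by fun_prop) t 0 ?_).eventually_lt_const (half_pos hη)
      rw [sub_self, mul_zero]
    filter_upwards [nhdsWithin_le_nhds hsmall, self_mem_nhdsWithin] with s hs hts
    refine relaxedVelocities_mono (inter_subset_inter_right _ ?_) (hγ _ (half_pos hη) t s ht hts)
    exact closedBall_subset_closedBall (by linarith)
  have hmem {t : ℝ} (ht : 0 ≤ t) : γ t ∈ X := by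
    refine hX.isClosed.closure_subset (Metric.mem_closure_iff.2 fun η hη ↦ ?_)
    obtain ⟨s, hs⟩ := (hslope ht (half_pos hη)).exists
    obtain ⟨_, x, ⟨hxX, hxt⟩, -⟩ := convexHull_nonempty_iff.1 ⟨_, hs⟩
    exact ⟨x, hxX, (mem_closedBall'.1 hxt).trans_lt (half_lt_self hη)⟩
  refine ⟨_, γ, hγK, hγ0, fun t ↦ hmem, fun t ht hdiff ↦
    mem_convexHull_image_of_forall_mem_relaxedVelocities hX hU hf (hmem ht) fun η hη ↦ ?_⟩
  exact (isClosed_relaxedVelocities_inter_closedBall hX hU hf _ _).mem_of_tendsto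
    ((hasDerivWithinAt_iff_tendsto_slope' self_notMem_Ioi).1
      hdiff.hasDerivAt.hasDerivWithinAt) (hslope ht hη)

end LimitCurve

section AbsolutelyContinuousCurves

theorem le_of_ae_deriv_nonpos {g : ℝ → ℝ} {a b : ℝ} (hab : a ≤ b)
    (hg : AbsolutelyContinuousOnInterval g a b)
    (h : ∀ᵐ t ∂volume.restrict (Ioc a b), deriv g t ≤ 0) : g b ≤ g a := by
  rw [← sub_nonpos, ← hg.integral_deriv_eq_sub, intervalIntegral.integral_of_le hab]
  exact setIntegral_nonpos_of_ae_restrict h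

variable {E : Type*} [NormedAddCommGroup E] [NormedSpace ℝ E]

theorem exp_mul_le_of_ae_fderiv_le {x : ℝ → E} {v : E → ℝ} {K : ℝ≥0} {T β : ℝ} (hT : 0 ≤ T)
    (hx : LipschitzOnWith K x (Icc 0 T)) (hv : ContDiff ℝ 1 v)
    (h : ∀ᵐ t ∂volume.restrict (Ioc 0 T),
      ∃ p, HasDerivAt x p t ∧ fderiv ℝ v (x t) p ≤ β * v (x t)) :
    Real.exp (-β * T) * v (x T) ≤ v (x 0) := by
  obtain ⟨L, hL⟩ := hv.locallyLipschitz.locallyLipschitzOn.exists_lipschitzOnWith_of_compact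
    (isCompact_Icc.image_of_continuousOn hx.continuousOn)
  have hvx : AbsolutelyContinuousOnInterval (v ∘ x) 0 T := by
    refine LipschitzOnWith.absolutelyContinuousOnInterval (K := L * K) ?_
    rw [uIcc_of_le hT]
    exact hL.comp hx (mapsTo_image x _)
  have hexp : AbsolutelyContinuousOnInterval (fun t ↦ Real.exp (-β * t)) 0 T :=
    ContDiffOn.absolutelyContinuousOnInterval (by fun_prop)
  have hle := le_of_ae_deriv_nonpos hT (hexp.mul hvx) ?_
  · simpa using hle
  filter_upwards [h] with t ⟨p, hp, hpv⟩
  have hderivexp : HasDerivAt (fun t ↦ Real.exp (-β * t)) (Real.exp (-β * t) * -β) t := by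
    simpa using ((hasDerivAt_id t).const_mul (-β)).exp
  have hderivv : HasDerivAt (v ∘ x) (fderiv ℝ v (x t) p) t :=
    (hv.differentiable one_ne_zero (x t)).hasFDerivAt.comp_hasDerivAt t hp
  rw [(hderivexp.mul hderivv).deriv]
  calc Real.exp (-β * t) * -β * v (x t) + Real.exp (-β * t) * fderiv ℝ v (x t) p
      = Real.exp (-β * t) * (fderiv ℝ v (x t) p - β * v (x t)) := by ring
    _ ≤ 0 := mul_nonpos_of_nonneg_of_nonpos (Real.exp_pos _).le (sub_nonpos.2 hpv)

theorem intervalIntegrable_deriv_of_lipschitzWith [CompleteSpace E] {K : ℝ≥0}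
    {γ : ℝ → E} (hγ : LipschitzWith K γ) (a b : ℝ) :
    IntervalIntegrable (deriv γ) volume a b := by
  refine (intervalIntegrable_const (c := (K : ℝ))).mono_fun
    (aestronglyMeasurable_deriv γ _) (.of_forall fun t ↦ ?_)
  rw [Real.norm_of_nonneg K.coe_nonneg]
  exact norm_deriv_le_of_lipschitz hγ

theorem lipschitzOnWith_of_eq_add_integral {x d : ℝ → E} {y : E} {a : ℝ} {S : Set ℝ} {K : ℝ≥0}
    (hS : S.OrdConnected) (hd : ∀ t ∈ S, IntervalIntegrable d volume a t)
    (hx : ∀ t ∈ S, x t = y + ∫ s in a..t, d s) (hK : ∀ᵐ t ∂volume.restrict S, ‖d t‖ ≤ K) :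
    LipschitzOnWith K x S := by
  refine LipschitzOnWith.of_dist_le_mul fun s hs t ht ↦ ?_
  rw [dist_eq_norm, hx s hs, hx t ht, add_sub_add_left_eq_sub,
    intervalIntegral.integral_interval_sub_left (hd s hs) (hd t ht), Real.dist_eq]
  refine intervalIntegral.norm_integral_le_of_norm_le_const_ae ?_
  filter_upwards [(ae_restrict_iff' hS.measurableSet).1 hK] with r hr hrst
  exact hr (hS.uIcc_subset ht hs (uIoc_subset_uIcc hrst))

theorem eq_add_integral_deriv_of_lipschitzWith [FiniteDimensional ℝ E] {K : ℝ≥0} {γ : ℝ → E}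
    (hγ : LipschitzWith K γ) (a b : ℝ) : γ b = γ a + ∫ s in a..b, deriv γ s := by
  have : CompleteSpace E := FiniteDimensional.complete ℝ E
  have hintegrable := intervalIntegrable_deriv_of_lipschitzWith hγ
  have hlip := lipschitzOnWith_of_eq_add_integral ordConnected_univ (y := γ a)
    (fun t _ ↦ hintegrable a t) (fun _ _ ↦ rfl) (.of_forall fun _ ↦ norm_deriv_le_of_lipschitz hγ)
  have hac := hγ.lipschitzOnWith.absolutelyContinuousOnInterval.sub
    (hlip.mono (subset_univ (uIcc a b))).absolutelyContinuousOnInterval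
  obtain ⟨c, hc⟩ := hac.const_of_ae_hasDerivAt_zero (by
    filter_upwards [hγ.ae_differentiableAt_real, (hintegrable a b).ae_hasDerivAt_integral]
      with t hdiff hprim ht
    simpa using hdiff.hasDerivAt.sub ((hprim ht a left_mem_uIcc).const_add (γ a)))
  have hab := (hc b right_mem_uIcc).trans (hc a left_mem_uIcc).symm
  rwa [Pi.sub_apply, Pi.sub_apply, intervalIntegral.integral_same, add_zero, sub_self,
    sub_eq_zero] at hab

theorem ae_hasDerivAt_of_eq_add_integral [CompleteSpace E] {x d : ℝ → E}
    (hd : ∀ t, 0 ≤ t → IntervalIntegrable d volume 0 t)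
    (hx : ∀ t, 0 ≤ t → x t = x 0 + ∫ s in (0 : ℝ)..t, d s) :
    ∀ᵐ t ∂volume.restrict (Ici 0), HasDerivAt x (d t) t := by
  rw [ae_restrict_iff' measurableSet_Ici]
  filter_upwards [ae_all_iff.2 fun n : ℕ ↦ (hd n n.cast_nonneg).ae_hasDerivAt_integral,
    Measure.ae_ne volume (0 : ℝ)] with t ht ht0 htI
  obtain ⟨n, hn⟩ := exists_nat_ge t
  have hderiv := ht n (Icc_subset_uIcc ⟨htI, hn⟩) 0 left_mem_uIcc
  refine (hderiv.const_add (x 0)).congr_of_eventuallyEq ?_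
  filter_upwards [Ioi_mem_nhds (lt_of_le_of_ne htI ht0.symm)] with s hs using hx s (le_of_lt hs)

end AbsolutelyContinuousCurves

section RieszExtension

variable {α V : Type*} [TopologicalSpace α] [AddCommGroup V] [Module ℝ V]

-- The functional `(v, 0) ↦ L v` is extended to `V × C(α, ℝ)` along the cone `0 ≤ A v + g`; this
-- cone contains the line `ℝ (v, -A v)`, so the extension factors through `(v, g) ↦ A v + g`.
theorem exists_nonneg_linearMap_comp_eq [CompactSpace α] (A : V →ₗ[ℝ] C(α, ℝ)) (L : V →ₗ[ℝ] ℝ)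
    (hL : ∀ v, 0 ≤ A v → 0 ≤ L v) {e : V} (he : A e = 1) :
    ∃ Λ : C(α, ℝ) →ₗ[ℝ] ℝ, (∀ g, 0 ≤ g → 0 ≤ Λ g) ∧ ∀ v, Λ (A v) = L v := by
  obtain ⟨Φ, hΦL, hΦ⟩ := riesz_extension
    ((PointedCone.positive ℝ C(α, ℝ)).comap (A.coprod LinearMap.id))
    ⟨(⊤ : Submodule ℝ V).prod ⊥, L ∘ₗ LinearMap.fst ℝ V C(α, ℝ) ∘ₗ Submodule.subtype _⟩
    (fun ⟨⟨v, g⟩, _, hg⟩ hv ↦ hL v (by simpa [show g = 0 from hg] using hv))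
    (fun ⟨v, g⟩ ↦ ⟨⟨(‖g‖ • e - v, 0), trivial, rfl⟩, fun p ↦ by
      simpa [he] using neg_le_iff_add_nonneg'.1 (g.neg_norm_le_apply p)⟩)
  have hfst (v : V) : Φ (v, 0) = L v := hΦL ⟨(v, 0), trivial, rfl⟩
  refine ⟨Φ ∘ₗ LinearMap.inr ℝ V C(α, ℝ), fun g hg ↦ hΦ _ (by simpa using hg), fun v ↦ ?_⟩
  have hle : 0 ≤ Φ (v, -A v) := hΦ _ (by simp)
  have hge : 0 ≤ Φ (-v, A v) := hΦ _ (by simp)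
  have h1 : Φ (v, -A v) = L v - Φ (0, A v) := by
    rw [← hfst, ← map_sub, Prod.mk_sub_mk, sub_zero, zero_sub]
  have h2 : Φ (-v, A v) = Φ (0, A v) - L v := by
    rw [← hfst, ← map_sub, Prod.mk_sub_mk, sub_zero, zero_sub]
  change Φ (0, A v) = L v
  linarith

variable [T2Space α] [MeasurableSpace α] [BorelSpace α]

theorem exists_measure_integral_eq_of_nonneg [CompactSpace α] (Λ : C(α, ℝ) →ₗ[ℝ] ℝ)
    (hΛ : ∀ g, 0 ≤ g → 0 ≤ Λ g) :
    ∃ ν : Measure α, IsFiniteMeasure ν ∧ ∀ g : C(α, ℝ), ∫ p, g p ∂ν = Λ g := by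
  let Λ' : C_c(α, ℝ) →ₗ[ℝ] ℝ :=
    { toFun g := Λ g.toContinuousMap
      map_add' g h := Λ.map_add g.toContinuousMap h.toContinuousMap
      map_smul' c g := Λ.map_smul c g.toContinuousMap }
  exact ⟨RealRMK.rieszMeasure (PositiveLinearMap.mk₀ Λ' fun g hg ↦ hΛ _ hg), inferInstance,
    fun g ↦ RealRMK.integral_rieszMeasure _ (CompactlySupportedContinuousMap.continuousMapEquiv g)⟩

theorem exists_measure_integral_comp_eq {K : Set α} (hK : IsCompact K) (A : V →ₗ[ℝ] α → ℝ)
    (hA : ∀ v, ContinuousOn (A v) K) (L : V →ₗ[ℝ] ℝ)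
    (hL : ∀ v, (∀ p ∈ K, 0 ≤ A v p) → 0 ≤ L v) {e : V} (he : ∀ p ∈ K, A e p = 1) :
    ∃ ν : Measure α, IsFiniteMeasure ν ∧ (∀ᵐ p ∂ν, p ∈ K) ∧ ∀ v, ∫ p, A v p ∂ν = L v := by
  have : CompactSpace K := isCompact_iff_compactSpace.1 hK
  let A' : V →ₗ[ℝ] C(K, ℝ) :=
    { toFun v := ⟨K.domRestrict (A v), (hA v).domRestrict⟩
      map_add' v w := ContinuousMap.ext fun p ↦ congrFun (A.map_add v w) p
      map_smul' c v := ContinuousMap.ext fun p ↦ congrFun (A.map_smul c v) p }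
  obtain ⟨Λ, hΛ, hΛA⟩ := exists_nonneg_linearMap_comp_eq A' L
    (fun v hv ↦ hL v fun p hp ↦ hv ⟨p, hp⟩) (e := e) (ContinuousMap.ext fun p ↦ he p p.2)
  obtain ⟨ν, _, hν⟩ := exists_measure_integral_eq_of_nonneg Λ hΛ
  have hemb : MeasurableEmbedding ((↑) : K → α) := .subtype_coe hK.measurableSet
  refine ⟨ν.map (↑), inferInstance, hemb.ae_map_iff.2 (.of_forall Subtype.prop), fun v ↦ ?_⟩
  rw [hemb.integral_map, ← hΛA, ← hν]
  rfl

end RieszExtension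

section Liouville

variable {E F : Type*} [NormedAddCommGroup E] [NormedSpace ℝ E]

/-- The discounted generator `v ↦ β v - ∇v · f` of the control system `ẋ = f(x, u)`, acting on
`C¹` functions. Its adjoint is the operator of the discounted Liouville equation. -/
noncomputable def discountedGenerator (f : E → F → E) (β : ℝ) :
    C^1⟮𝓘(ℝ, E), E; ℝ⟯ →ₗ[ℝ] E × F → ℝ where
  toFun v p := β * v p.1 - fderiv ℝ v p.1 (f p.1 p.2)
  map_add' v w := funext fun p ↦ by
    have hv := v.contMDiff.contDiff.differentiable one_ne_zero p.1
    have hw := w.contMDiff.contDiff.differentiable one_ne_zero p.1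
    simp only [ContMDiffMap.coe_add, Pi.add_apply, fderiv_add hv hw, add_apply]
    ring
  map_smul' c v := funext fun p ↦ by
    have hv := v.contMDiff.contDiff.differentiable one_ne_zero p.1
    simp only [ContMDiffMap.coe_smul, Pi.smul_apply, fderiv_const_smul hv, smul_apply,
      smul_eq_mul, RingHom.id_apply]
    ring

theorem continuousOn_fderiv_uncurry [TopologicalSpace F] {f : E → F → E} {K : Set (E × F)}
    (hf : ContinuousOn (uncurry f) K) {v : E → ℝ} (hv : ContDiff ℝ 1 v) :
    ContinuousOn (fun p : E × F ↦ fderiv ℝ v p.1 (f p.1 p.2)) K :=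
  ((hv.continuous_fderiv one_ne_zero).comp continuous_fst).continuousOn.clm_apply hf

theorem integrable_of_continuousOn_of_ae_mem {α : Type*} [TopologicalSpace α] [T2Space α]
    [MeasurableSpace α] [BorelSpace α] {μ : Measure α} [IsFiniteMeasureOnCompacts μ] {K : Set α}
    {g : α → ℝ} (hg : ContinuousOn g K) (hK : IsCompact K) (hμ : ∀ᵐ x ∂μ, x ∈ K) :
    Integrable g μ := by
  rw [← Measure.restrict_eq_self_of_ae_mem hμ]
  exact hg.integrableOn_compact hK

theorem exists_measure_discounted_liouville [TopologicalSpace F] [T2Space F] [MeasurableSpace E]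
    [BorelSpace E] [MeasurableSpace F] [BorelSpace F] [SecondCountableTopologyEither E F]
    {f : E → F → E} {K : Set (E × F)} {β : ℝ} (hβ : β ≠ 0) (hK : IsCompact K)
    (hf : ContinuousOn (uncurry f) K) {μ₀ : Measure E}
    (hμ₀ : ∀ v : E → ℝ, ContDiff ℝ 1 v → Integrable v μ₀)
    (h : ∀ v : E → ℝ, ContDiff ℝ 1 v → (∀ p ∈ K, fderiv ℝ v p.1 (f p.1 p.2) ≤ β * v p.1) →
      ∀ᵐ x ∂μ₀, 0 ≤ v x) :
    ∃ μ : Measure (E × F), IsFiniteMeasure μ ∧ (∀ᵐ p ∂μ, p ∈ K) ∧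
      ∀ v : E → ℝ, ContDiff ℝ 1 v → β * ∫ p, v p.1 ∂μ =
        ∫ x, v x ∂μ₀ + ∫ p, fderiv ℝ v p.1 (f p.1 p.2) ∂μ := by
  have hcont (v : E → ℝ) (hv : ContDiff ℝ 1 v) : ContinuousOn (fun p : E × F ↦ v p.1) K :=
    (hv.continuous.comp continuous_fst).continuousOn
  let L : C^1⟮𝓘(ℝ, E), E; ℝ⟯ →ₗ[ℝ] ℝ :=
    { toFun v := ∫ x, v x ∂μ₀
      map_add' v w := integral_add (hμ₀ v v.contMDiff.contDiff) (hμ₀ w w.contMDiff.contDiff)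
      map_smul' c v := integral_const_mul c v }
  obtain ⟨μ, hμfin, hμK, hμ⟩ := exists_measure_integral_comp_eq hK (discountedGenerator f β)
    (fun v ↦ (continuousOn_const.mul (hcont v v.contMDiff.contDiff)).sub
      (continuousOn_fderiv_uncurry hf v.contMDiff.contDiff)) L
    (fun v hv ↦ integral_nonneg_of_ae (h v v.contMDiff.contDiff fun p hp ↦ sub_nonneg.1 (hv p hp)))
    (e := ContMDiffMap.const β⁻¹)
    (fun p _ ↦ by simp [discountedGenerator, ContMDiffMap.const, hβ])
  refine ⟨μ, hμfin, hμK, fun v hv ↦ ?_⟩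
  have hgen : ∫ p, (β * v p.1 - fderiv ℝ v p.1 (f p.1 p.2)) ∂μ = ∫ x, v x ∂μ₀ :=
    hμ ⟨v, hv.contMDiff⟩
  rw [integral_sub ((integrable_of_continuousOn_of_ae_mem (hcont v hv) hK hμK).const_mul β)
    (integrable_of_continuousOn_of_ae_mem (continuousOn_fderiv_uncurry hf hv) hK hμK),
    integral_const_mul] at hgen
  exact sub_eq_iff_eq_add.1 hgen

end Liouville

section Support

variable {α : Type*} [TopologicalSpace α] [MeasurableSpace α] {μ : Measure α} {K : Set α}

theorem msupport_eq_support (μ : Measure α) : msupport μ = μ.support := by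
  rw [Measure.support_eq_forall_isOpen]
  exact Set.ext fun x ↦ forall_congr' fun s ↦ forall_comm

theorem msupport_subset_iff_ae_mem [HereditarilyLindelofSpace α] (hK : IsClosed K) :
    msupport μ ⊆ K ↔ ∀ᵐ x ∂μ, x ∈ K := by
  rw [msupport_eq_support]
  exact ⟨mem_of_superset Measure.support_mem_ae, Measure.support_subset_of_isClosed hK⟩

end Support

section MaximumControlledInvariantSet

variable {n m : ℕ} {X : Set (EuclideanSpace ℝ (Fin n))} {U : Set (EuclideanSpace ℝ (Fin m))}
  {f : EuclideanSpace ℝ (Fin n) → EuclideanSpace ℝ (Fin m) → EuclideanSpace ℝ (Fin n)} {β : ℝ}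

theorem IsAdmissible.lipschitzOnWith {x : ℝ → EuclideanSpace ℝ (Fin n)} {K : ℝ≥0}
    (hx : IsAdmissible X U f x) (hK : ∀ y ∈ X, ∀ u ∈ U, ‖f y u‖ ≤ K) :
    LipschitzOnWith K x (Ici 0) := by
  obtain ⟨hxX, d, hd, hxd, hconv⟩ := hx
  refine lipschitzOnWith_of_eq_add_integral ordConnected_Ici hd hxd ?_
  filter_upwards [hconv, ae_restrict_mem measurableSet_Ici] with t ht ht0
  rw [← relaxedVelocities_singleton] at ht
  refine norm_le_of_mem_relaxedVelocities (fun y hy ↦ hK y ?_) ht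
  rw [mem_singleton_iff.1 hy]
  exact hxX t ht0

theorem IsAdmissible.ae_hasDerivAt {x : ℝ → EuclideanSpace ℝ (Fin n)}
    (hx : IsAdmissible X U f x) :
    ∀ᵐ t ∂volume.restrict (Ici 0), ∃ p ∈ convexHull ℝ (f (x t) '' U), HasDerivAt x p t := by
  obtain ⟨-, d, hd, hxd, hconv⟩ := hx
  filter_upwards [hconv, ae_hasDerivAt_of_eq_add_integral hd hxd] with t hconv hderiv
  exact ⟨d t, hconv, hderiv⟩

theorem isAdmissible_of_lipschitzWith {γ : ℝ → EuclideanSpace ℝ (Fin n)} {K : ℝ≥0}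
    (hγ : LipschitzWith K γ) (hγX : ∀ t, 0 ≤ t → γ t ∈ X)
    (hderiv : ∀ t, 0 ≤ t → DifferentiableAt ℝ γ t → deriv γ t ∈ convexHull ℝ (f (γ t) '' U)) :
    IsAdmissible X U f γ := by
  refine ⟨hγX, deriv γ, fun t _ ↦ intervalIntegrable_deriv_of_lipschitzWith hγ 0 t,
    fun t _ ↦ eq_add_integral_deriv_of_lipschitzWith hγ 0 t, ?_⟩
  filter_upwards [ae_restrict_of_ae hγ.ae_differentiableAt_real,
    ae_restrict_mem measurableSet_Ici] with t hdiff ht using hderiv t ht hdiff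

theorem mciC_subset : mciC X U f ⊆ X := by
  rintro _ ⟨x, hx, rfl⟩
  exact hx.1 0 le_rfl

theorem nonneg_of_mem_mciC (hX : IsCompact X) (hU : IsCompact U)
    (hf : ContinuousOn (uncurry f) (X ×ˢ U)) (hβ : 0 < β) {v : EuclideanSpace ℝ (Fin n) → ℝ}
    (hv : ContDiff ℝ 1 v) (hle : ∀ x ∈ X, ∀ u ∈ U, fderiv ℝ v x (f x u) ≤ β * v x)
    {x₀ : EuclideanSpace ℝ (Fin n)} (hx₀ : x₀ ∈ mciC X U f) : 0 ≤ v x₀ := by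
  obtain ⟨x, hx, rfl⟩ := hx₀
  obtain ⟨M, hM⟩ := (hX.prod hU).exists_bound_of_continuousOn hf
  obtain ⟨B, hB⟩ := hX.exists_bound_of_continuousOn hv.continuous.continuousOn
  have hlip := hx.lipschitzOnWith (K := M.toNNReal)
    fun y hy u hu ↦ (hM (y, u) ⟨hy, hu⟩).trans M.le_coe_toNNReal
  have hsub : ∀ᵐ t ∂volume.restrict (Ici 0),
      ∃ p, HasDerivAt x p t ∧ fderiv ℝ v (x t) p ≤ β * v (x t) := by
    filter_upwards [hx.ae_hasDerivAt, ae_restrict_mem measurableSet_Ici] with t ⟨p, hp, hxp⟩ ht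
    refine ⟨p, hxp, convexHull_min (t := {z | fderiv ℝ v (x t) z ≤ β * v (x t)}) ?_
      (convex_halfSpace_le (fderiv ℝ v (x t)).isLinear _) hp⟩
    exact image_subset_iff.2 fun u hu ↦ hle _ (hx.1 t ht) u hu
  have hbound (T : ℝ) (hT : 0 ≤ T) : Real.exp (-β * T) * -B ≤ v (x 0) :=
    calc Real.exp (-β * T) * -B ≤ Real.exp (-β * T) * v (x T) := by
          gcongr
          exact neg_le_of_abs_le (hB _ (hx.1 T hT))
      _ ≤ v (x 0) := exp_mul_le_of_ae_fderiv_le hT (hlip.mono Icc_subset_Ici_self) hv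
          (ae_restrict_of_ae_restrict_of_subset (Ioc_subset_Icc_self.trans Icc_subset_Ici_self)
            hsub)
  have hlim : Tendsto (fun T ↦ Real.exp (-β * T) * -B) atTop (𝓝 0) := by
    have hbot : Tendsto (fun T : ℝ ↦ -β * T) atTop atBot :=
      tendsto_id.const_mul_atTop_of_neg (neg_lt_zero.2 hβ)
    rw [← zero_mul (-B)]
    exact (Real.tendsto_exp_atBot.comp hbot).mul_const (-B)
  exact le_of_tendsto hlim (eventually_atTop.2 ⟨0, hbound⟩)

theorem mem_mciC_iff (hX : IsCompact X) (hU : IsCompact U)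
    (hf : ContinuousOn (uncurry f) (X ×ˢ U)) {x₀ : EuclideanSpace ℝ (Fin n)} :
    x₀ ∈ mciC X U f ↔ ∀ ε > 0, ∀ T, IsApproxViable f X U ε T x₀ := by
  refine ⟨fun hx₀ ε hε ↦ ?_, fun h ↦ ?_⟩
  · obtain ⟨V, hV, hV0, hgrowth, hviable⟩ := exists_contDiff_growth f X U hε one_pos
    refine hviable x₀ (le_antisymm ?_ (hV0 x₀))
    refine neg_nonneg.1 (nonneg_of_mem_mciC hX hU hf one_pos hV.neg (fun x hx u hu ↦ ?_) hx₀)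
    rw [fderiv_fun_neg, neg_apply, mul_neg, neg_le_neg_iff]
    exact hgrowth x hx u hu
  · obtain ⟨K, γ, hγ, hγ0, hγX, hderiv⟩ := exists_trajectory_of_forall_isApproxViable hX hU hf h
    exact ⟨γ, isAdmissible_of_lipschitzWith hγ hγX hderiv, hγ0⟩

theorem isCompact_mciC (hX : IsCompact X) (hU : IsCompact U)
    (hf : ContinuousOn (uncurry f) (X ×ˢ U)) : IsCompact (mciC X U f) := by
  refine hX.of_isClosed_subset (isClosed_of_closure_subset fun x hx ↦ ?_) mciC_subset
  refine (mem_mciC_iff hX hU hf).2 fun ε hε T ↦ ?_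
  obtain ⟨z, hz, hxz⟩ := Metric.mem_closure_iff.1 hx (ε / 2) (half_pos hε)
  exact ((mem_mciC_iff hX hU hf).1 hz (ε / 2) (half_pos hε) T).of_add_dist_le (by linarith)

theorem LiouvilleC.ae_eq_zero_of_growth {μ₀ : Measure (EuclideanSpace ℝ (Fin n))}
    [IsFiniteMeasure μ₀] {μ : Measure (EuclideanSpace ℝ (Fin n) × EuclideanSpace ℝ (Fin m))}
    [IsFiniteMeasure μ] (h : LiouvilleC f β μ₀ μ) (hX : IsCompact X) (hU : IsCompact U)
    (hf : ContinuousOn (uncurry f) (X ×ˢ U)) (hμ₀ : ∀ᵐ x ∂μ₀, x ∈ X)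
    (hμ : ∀ᵐ p ∂μ, p ∈ X ×ˢ U) {V : EuclideanSpace ℝ (Fin n) → ℝ} (hV : ContDiff ℝ 1 V)
    (hV0 : ∀ x, 0 ≤ V x) (hgrowth : ∀ x ∈ X, ∀ u ∈ U, β * V x ≤ fderiv ℝ V x (f x u)) :
    ∀ᵐ x ∂μ₀, V x = 0 := by
  have hXU := hX.prod hU
  have hmono : ∫ p, β * V p.1 ∂μ ≤ ∫ p, fderiv ℝ V p.1 (f p.1 p.2) ∂μ := by
    refine integral_mono_ae ((integrable_of_continuousOn_of_ae_mem
      (hV.continuous.comp continuous_fst).continuousOn hXU hμ).const_mul β)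
      (integrable_of_continuousOn_of_ae_mem (continuousOn_fderiv_uncurry hf hV) hXU hμ) ?_
    filter_upwards [hμ] with p hp using hgrowth p.1 hp.1 p.2 hp.2
  have hle : ∫ x, V x ∂μ₀ ≤ 0 := by
    rw [integral_const_mul] at hmono
    linarith [h V hV]
  exact (integral_eq_zero_iff_of_nonneg hV0 (integrable_of_continuousOn_of_ae_mem
    hV.continuous.continuousOn hX hμ₀)).1 (hle.antisymm (integral_nonneg hV0))

theorem LiouvilleC.ae_mem_mciC {μ₀ : Measure (EuclideanSpace ℝ (Fin n))}
    [IsFiniteMeasure μ₀] {μ : Measure (EuclideanSpace ℝ (Fin n) × EuclideanSpace ℝ (Fin m))}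
    [IsFiniteMeasure μ] (h : LiouvilleC f β μ₀ μ) (hX : IsCompact X) (hU : IsCompact U)
    (hf : ContinuousOn (uncurry f) (X ×ˢ U)) (hβ : 0 < β) (hμ₀ : ∀ᵐ x ∂μ₀, x ∈ X)
    (hμ : ∀ᵐ p ∂μ, p ∈ X ×ˢ U) : ∀ᵐ x ∂μ₀, x ∈ mciC X U f := by
  have hviable (k : ℕ) : ∀ᵐ x ∂μ₀, ∀ T, IsApproxViable f X U (1 / (k + 1)) T x := by
    obtain ⟨V, hV, hV0, hgrowth, hviable⟩ :=
      exists_contDiff_growth f X U (Nat.one_div_pos_of_nat (n := k)) hβ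
    exact (h.ae_eq_zero_of_growth hX hU hf hμ₀ hμ hV hV0 hgrowth).mono hviable
  filter_upwards [ae_all_iff.2 hviable] with x hx
  refine (mem_mciC_iff hX hU hf).2 fun ε hε T ↦ ?_
  obtain ⟨k, hk⟩ := exists_nat_one_div_lt hε
  exact (hx k T).of_add_dist_le (by rw [dist_self, add_zero]; exact hk.le)

theorem exists_liouvilleC_of_ae_mem_mciC (hX : IsCompact X) (hU : IsCompact U)
    (hf : ContinuousOn (uncurry f) (X ×ˢ U)) (hβ : 0 < β)
    {μ₀ : Measure (EuclideanSpace ℝ (Fin n))} [IsFiniteMeasure μ₀]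
    (hμ₀ : ∀ᵐ x ∂μ₀, x ∈ mciC X U f) :
    ∃ μ : Measure (EuclideanSpace ℝ (Fin n) × EuclideanSpace ℝ (Fin m)),
      IsFiniteMeasure μ ∧ (∀ᵐ p ∂μ, p ∈ X ×ˢ U) ∧ LiouvilleC f β μ₀ μ :=
  exists_measure_discounted_liouville hβ.ne' (hX.prod hU) hf
    (fun _ hv ↦ integrable_of_continuousOn_of_ae_mem hv.continuous.continuousOn
      (isCompact_mciC hX hU hf) hμ₀)
    (fun _ hv hle ↦ hμ₀.mono fun _ ↦
      nonneg_of_mem_mciC hX hU hf hβ hv fun x hx u hu ↦ hle (x, u) ⟨hx, hu⟩)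

theorem FeasibleC.measure_le (hX : IsCompact X) (hU : IsCompact U)
    (hf : ContinuousOn (uncurry f) (X ×ˢ U)) (hβ : 0 < β)
    {μ₀ μh : Measure (EuclideanSpace ℝ (Fin n))}
    {μ : Measure (EuclideanSpace ℝ (Fin n) × EuclideanSpace ℝ (Fin m))}
    (h : FeasibleC X U f β μ₀ μ μh) : μ₀ X ≤ volume (mciC X U f) := by
  obtain ⟨_, _, -, hμ₀, -, hμ, hL, hsum⟩ := h
  have hmci := hL.ae_mem_mciC hX hU hf hβ ((msupport_subset_iff_ae_mem hX.isClosed).1 hμ₀)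
    ((msupport_subset_iff_ae_mem (hX.prod hU).isClosed).1 hμ)
  calc μ₀ X ≤ μ₀ (mciC X U f) := measure_mono_ae (hmci.mono fun _ hx _ ↦ hx)
    _ ≤ (μ₀ + μh) (mciC X U f) := Measure.le_add_right le_rfl _
    _ ≤ volume (mciC X U f) := hsum ▸ Measure.restrict_apply_le _ _

theorem exists_feasibleC_volume_restrict_mciC (hX : IsCompact X) (hU : IsCompact U)
    (hf : ContinuousOn (uncurry f) (X ×ˢ U)) (hβ : 0 < β) :
    ∃ μ μh, FeasibleC X U f β (volume.restrict (mciC X U f)) μ μh := by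
  have hmci : MeasurableSet (mciC X U f) := (isCompact_mciC hX hU hf).measurableSet
  have hfin {S : Set (EuclideanSpace ℝ (Fin n))} (hS : S ⊆ X) :
      IsFiniteMeasure (volume.restrict S) :=
    isFiniteMeasure_restrict.2 ((measure_mono hS).trans_lt hX.measure_lt_top).ne
  have hsupp {S : Set (EuclideanSpace ℝ (Fin n))} (hS : S ⊆ X) (hSm : MeasurableSet S) :
      msupport (volume.restrict S) ⊆ X :=
    (msupport_subset_iff_ae_mem hX.isClosed).2 ((ae_restrict_mem hSm).mono hS)
  have : IsFiniteMeasure (volume.restrict (mciC X U f)) := hfin mciC_subset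
  obtain ⟨μ, hμfin, hμ, hL⟩ :=
    exists_liouvilleC_of_ae_mem_mciC hX hU hf hβ (ae_restrict_mem (μ := volume) hmci)
  refine ⟨μ, volume.restrict (X \ mciC X U f), this, hμfin, hfin sdiff_subset,
    hsupp mciC_subset hmci, hsupp sdiff_subset (hX.measurableSet.diff hmci),
    (msupport_subset_iff_ae_mem (hX.prod hU).isClosed).2 hμ, hL, ?_⟩
  rw [← Measure.restrict_union disjoint_sdiff_right (hX.measurableSet.diff hmci),
    union_sdiff_cancel mciC_subset]

end MaximumControlledInvariantSet

theorem continuous_primal_value_eq_volume_MCI_general {n m : ℕ}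
    (X : Set (EuclideanSpace ℝ (Fin n))) (U : Set (EuclideanSpace ℝ (Fin m)))
    (hX : IsCompact X) (hU : IsCompact U)
    (f : EuclideanSpace ℝ (Fin n) → EuclideanSpace ℝ (Fin m) → EuclideanSpace ℝ (Fin n))
    (hf : ContinuousOn (uncurry f) (X ×ˢ U)) (β : ℝ) (hβ : 0 < β) :
    sSup {r : ℝ≥0∞ | ∃ μ₀ μ μh, FeasibleC X U f β μ₀ μ μh ∧ r = μ₀ X}
      = volume (mciC X U f) ∧
    ∃ μ μh, FeasibleC X U f β (volume.restrict (mciC X U f)) μ μh := by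
  obtain ⟨μ, μh, hfeas⟩ := exists_feasibleC_volume_restrict_mciC hX hU hf hβ
  have hgreatest : IsGreatest {r : ℝ≥0∞ | ∃ μ₀ μ μh, FeasibleC X U f β μ₀ μ μh ∧ r = μ₀ X}
      (volume (mciC X U f)) := by
    refine ⟨⟨_, μ, μh, hfeas, ?_⟩, ?_⟩
    · rw [Measure.restrict_apply hX.measurableSet, inter_eq_right.2 mciC_subset]
    · rintro _ ⟨μ₀, μ', μh', h, rfl⟩
      exact h.measure_le hX hU hf hβ
  exact ⟨hgreatest.isLUB.sSup_eq, μ, μh, hfeas⟩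

theorem continuous_primal_value_eq_volume_MCI {n m : ℕ}
    (X : Set (EuclideanSpace ℝ (Fin n))) (U : Set (EuclideanSpace ℝ (Fin m)))
    (hX : IsCompact X) (hU : IsCompact U)
    (f : EuclideanSpace ℝ (Fin n) → EuclideanSpace ℝ (Fin m) → EuclideanSpace ℝ (Fin n))
    (hf : Continuous fun p : EuclideanSpace ℝ (Fin n) × EuclideanSpace ℝ (Fin m) => f p.1 p.2)
    (β : ℝ) (hβ : 0 < β) :
    sSup {r : ℝ≥0∞ | ∃ μ₀ μ μh, FeasibleC X U f β μ₀ μ μh ∧ r = μ₀ X}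
      = volume (mciC X U f) ∧
    ∃ μ μh, FeasibleC X U f β (volume.restrict (mciC X U f)) μ μh :=
  continuous_primal_value_eq_volume_MCI_general X U hX hU f hf.continuousOn β hβ
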